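/- arXiv:1412.5398 — 2 statements merged into one kernel-verified Lean document; each statement's English description precedes it below -/
import Mathlib

section
/- Let G be a graph and k ≥ 3 an integer. Then G has a nowhere-zero k-flow if and only if there is an orientation D of G such that the function f : V(G) → ℝ defined by f(v) = (k/(k−2))·(2·d⁺_{D(G)}(v) − d_G(v)) is a balanced valuation of G, where d⁺_{D(G)}(v) is the outdegree of v in the orientation D and d_G(v) is the degree of v in G. -/
open SimpleGraph

variable {V : Type*}

/-- The set of edges of `G` with exactly one end in `S`: the edge-cut `∂_G(S)`. -/
def edgeCut (G : SimpleGraph V) (S : Set V) : Set (Sym2 V) :=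
  {e | e ∈ G.edgeSet ∧ ∃ a b, e = s(a, b) ∧ a ∈ S ∧ b ∉ S}

/-- The set of edges of `G` with one end in `S` and the other end in `T`. -/
def edgesBetween (G : SimpleGraph V) (S T : Set V) : Set (Sym2 V) :=
  {e | e ∈ G.edgeSet ∧ ∃ a b, e = s(a, b) ∧ a ∈ S ∧ b ∈ T}

/-- A graph is cubic if every vertex has degree 3. -/
def IsCubic (G : SimpleGraph V) : Prop :=
  ∀ v, (G.neighborSet v).ncard = 3

/-- A graph is bridgeless if no edge is a bridge. -/
def Bridgeless (G : SimpleGraph V) : Prop :=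
  ∀ e ∈ G.edgeSet, ¬ G.IsBridge e

/-- `G` has a circuit all of whose vertices lie in `S`. -/
def HasCycleIn (G : SimpleGraph V) (S : Set V) : Prop :=
  ∃ (v : V) (p : G.Walk v v), p.IsCycle ∧ ∀ x ∈ p.support, x ∈ S

/-- `G` is cyclically `k`-edge-connected: there is no edge-cut with fewer than `k` edges
whose deletion leaves at least two components each containing a circuit. -/
def CyclicallyEdgeConnected (G : SimpleGraph V) (k : ℕ) : Prop :=
  ∀ S : Set V, HasCycleIn G S → HasCycleIn G Sᶜ → k ≤ (edgeCut G S).ncard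

/-- `F` is a 2-factor of `G`: a spanning subgraph in which every vertex has degree 2. -/
def IsTwoFactor (G F : SimpleGraph V) : Prop :=
  F ≤ G ∧ ∀ v, (F.neighborSet v).ncard = 2

/-- The number of connected components of odd cardinality (odd circuits of a 2-factor). -/
noncomputable def oddComponents (F : SimpleGraph V) : ℕ :=
  {C : F.ConnectedComponent | Odd C.supp.ncard}.ncard

/-- `G` has a nowhere-zero `k`-flow: an orientation and an assignment of values in
`{1, …, k-1}` to the edges satisfying Kirchhoff's law at every vertex, encoded as a
skew-symmetric function on ordered pairs of adjacent vertices. -/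
def HasNowhereZeroFlow [Fintype V] (G : SimpleGraph V) (k : ℕ) : Prop :=
  ∃ f : V → V → ℤ,
    (∀ v w, f v w = - f w v) ∧
    (∀ v w, G.Adj v w → f v w ≠ 0 ∧ (f v w).natAbs < k) ∧
    (∀ v w, ¬ G.Adj v w → f v w = 0) ∧
    (∀ v, ∑ w, f v w = 0)

/-- A balanced valuation of `G`. -/
def BalancedValuation (G : SimpleGraph V) (f : V → ℝ) : Prop :=
  ∀ X : Set V, |∑ᶠ v ∈ X, f v| ≤ ((edgeCut G X).ncard : ℝ)

/-- A canonical 4-edge-coloring of `G` w.r.t. the 2-factor `F`: the edges of the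
complementary 1-factor get color 1; the edges of `F` get colors in {0,2,3}, properly
(adjacent edges of `F` get distinct colors, which forces the alternation of 2 and 3);
each odd circuit of `F` carries exactly one edge of color 0, each even circuit none. -/
def IsCanonicalColoring (G F : SimpleGraph V) (c : Sym2 V → ℕ) : Prop :=
  (∀ e ∈ G.edgeSet, e ∉ F.edgeSet → c e = 1) ∧
  (∀ e ∈ F.edgeSet, c e = 0 ∨ c e = 2 ∨ c e = 3) ∧
  (∀ e ∈ F.edgeSet, ∀ f ∈ F.edgeSet, e ≠ f → (∃ v, v ∈ e ∧ v ∈ f) → c e ≠ c f) ∧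
  (∀ C : F.ConnectedComponent,
    (Odd C.supp.ncard →
      {e | e ∈ F.edgeSet ∧ (∀ w ∈ e, w ∈ C.supp) ∧ c e = 0}.ncard = 1) ∧
    (¬ Odd C.supp.ncard →
      {e | e ∈ F.edgeSet ∧ (∀ w ∈ e, w ∈ C.supp) ∧ c e = 0}.ncard = 0))

/-- The set of vertices of `G` at which color 2 is missing. -/
def missingTwo (G : SimpleGraph V) (c : Sym2 V → ℕ) : Set V :=
  {v | ∀ e ∈ G.edgeSet, v ∈ e → c e ≠ 2}

/-- The spanning subgraph of `G` induced by the edges of colors 1 and 2. -/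
def colorSubgraph (G : SimpleGraph V) (c : Sym2 V → ℕ) : SimpleGraph V :=
  SimpleGraph.fromEdgeSet {e | e ∈ G.edgeSet ∧ (c e = 1 ∨ c e = 2)}

/-- The edge type of the multigraph `M_G`: the edges of `G` together with, for each
`i ∈ {1,…,t}`, two parallel edges `f'_i = (i, false)` and `f_i = (i, true)` joining
`z_{2i-1}` and `z_{2i}`. -/
abbrev MEdge (G : SimpleGraph V) (t : ℕ) := G.edgeSet ⊕ (Fin t × Bool)

/-- Reference directions for the edges of `M_G`: `dir` is a fixed choice of direction
for each edge of `G`, and the added edge `(i, b)` is directed from `za i` to `zb i`. -/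
def mEnds (G : SimpleGraph V) (dir : G.edgeSet → V × V) {t : ℕ} (za zb : Fin t → V) :
    MEdge G t → V × V
  | .inl e => dir e
  | .inr (i, _) => (za i, zb i)

/-- Kirchhoff's law for a signed flow on a multigraph with reference directions. -/
def Conserves {E : Type*} (ends : E → V × V) (ψ : E → ℤ) : Prop :=
  ∀ v : V, ∑ᶠ e ∈ {e | (ends e).1 = v}, ψ e = ∑ᶠ e ∈ {e | (ends e).2 = v}, ψ e

/-- The decomposition data of a canonical nowhere-zero 4-flow on `M_G`:
`ψ₁` is a flow of constant absolute value 2 around the circuits of the 2-factor `F`;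
`ψ₂` is a flow of constant absolute value 1 around the circuits of the 2-factor of `M_G`
induced by colors 1 and 2 (the edges `f'_i` included);
`ψ₃` is a flow of constant absolute value 1 around each 2-circuit `{f_i, f'_i}`, directed
so that `f'_i` gets the same direction as in `ψ₂`. -/
def IsCanonicalDecomp (G F : SimpleGraph V) (c : Sym2 V → ℕ)
    (dir : G.edgeSet → V × V) {t : ℕ} (za zb : Fin t → V)
    (ψ₁ ψ₂ ψ₃ : MEdge G t → ℤ) : Prop :=
  Conserves (mEnds G dir za zb) ψ₁ ∧
  Conserves (mEnds G dir za zb) ψ₂ ∧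
  Conserves (mEnds G dir za zb) ψ₃ ∧
  (∀ e : G.edgeSet, (e : Sym2 V) ∈ F.edgeSet → (ψ₁ (Sum.inl e)).natAbs = 2) ∧
  (∀ e : G.edgeSet, (e : Sym2 V) ∉ F.edgeSet → ψ₁ (Sum.inl e) = 0) ∧
  (∀ p : Fin t × Bool, ψ₁ (Sum.inr p) = 0) ∧
  (∀ e : G.edgeSet, (c (e : Sym2 V) = 1 ∨ c (e : Sym2 V) = 2) → (ψ₂ (Sum.inl e)).natAbs = 1) ∧
  (∀ e : G.edgeSet, ¬ (c (e : Sym2 V) = 1 ∨ c (e : Sym2 V) = 2) → ψ₂ (Sum.inl e) = 0) ∧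
  (∀ i : Fin t, (ψ₂ (Sum.inr (i, false))).natAbs = 1) ∧
  (∀ i : Fin t, ψ₂ (Sum.inr (i, true)) = 0) ∧
  (∀ e : G.edgeSet, ψ₃ (Sum.inl e) = 0) ∧
  (∀ i : Fin t, ψ₃ (Sum.inr (i, false)) = ψ₂ (Sum.inr (i, false))) ∧
  (∀ i : Fin t, (ψ₃ (Sum.inr (i, true))).natAbs = 1)

/-- A canonical nowhere-zero 4-flow on `M_G` is a sum of three flows as above. -/
def IsCanonicalFourFlow (G F : SimpleGraph V) (c : Sym2 V → ℕ)
    (dir : G.edgeSet → V × V) {t : ℕ} (za zb : Fin t → V)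
    (ψ : MEdge G t → ℤ) : Prop :=
  ∃ ψ₁ ψ₂ ψ₃ : MEdge G t → ℤ,
    (∀ e, ψ e = ψ₁ e + ψ₂ e + ψ₃ e) ∧ IsCanonicalDecomp G F c dir za zb ψ₁ ψ₂ ψ₃

/-- The outdegree of `v` in the orientation `D` induced by the signed flow `ψ`. -/
noncomputable def mOutDeg {E : Type*} (ends : E → V × V) (ψ : E → ℤ) (v : V) : ℕ :=
  {e | ((ends e).1 = v ∧ 0 < ψ e) ∨ ((ends e).2 = v ∧ ψ e < 0)}.ncard

/-- The degree of `v` in the multigraph with endpoint map `ends`. -/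
noncomputable def mDeg {E : Type*} (ends : E → V × V) (v : V) : ℕ :=
  {e | (ends e).1 = v ∨ (ends e).2 = v}.ncard

/-- The class `A` (white vertices) of the flow partition induced by `ψ`. -/
def partA {E : Type*} (ends : E → V × V) (ψ : E → ℤ) : Set V :=
  {v | 2 * mOutDeg ends ψ v < mDeg ends v}

/-- The class `B` (black vertices) of the flow partition induced by `ψ`. -/
def partB {E : Type*} (ends : E → V × V) (ψ : E → ℤ) : Set V :=
  {v | mDeg ends v < 2 * mOutDeg ends ψ v}

/-- A 6-edge-cut `Ecut` is bad w.r.t. a flow partition `(A, B)`: it has exactly four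
edges of color 1 and two edges of color 2, and it separates `{z1,z2,z3,z4}` into two
pairs lying in different components of `G - Ecut`, one pair contained in `A` or in `B`. -/
def IsBadCut (G : SimpleGraph V) (c : Sym2 V → ℕ) (z1 z2 z3 z4 : V)
    (Ecut : Set (Sym2 V)) (A B : Set V) : Prop :=
  {e ∈ Ecut | c e = 1}.ncard = 4 ∧ {e ∈ Ecut | c e = 2}.ncard = 2 ∧
  ∃ p q r s : V, ({p, q, r, s} : Set V) = {z1, z2, z3, z4} ∧
    ({p, q} : Set V) ∩ {r, s} = ∅ ∧ p ≠ q ∧ r ≠ s ∧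
    (G.deleteEdges Ecut).Reachable p q ∧ (G.deleteEdges Ecut).Reachable r s ∧
    ¬ (G.deleteEdges Ecut).Reachable p r ∧
    (({p, q} : Set V) ⊆ A ∨ ({p, q} : Set V) ⊆ B)

section Aux
open Finset Classical

noncomputable def cutS [Fintype V] (u : V → V → ℤ) (X : Finset V) : ℤ :=
  ∑ a ∈ X, ∑ b ∈ Xᶜ, u a b

lemma cutS_eq [Fintype V] (u : V → V → ℤ) (X : Finset V) :
    cutS u X = ∑ a, ∑ b, if a ∈ X ∧ b ∉ X then u a b else 0 := by
  unfold cutS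
  rw [← Finset.sum_filter_add_sum_filter_not univ (fun a => a ∈ X)]
  rw [Finset.sum_eq_zero (s := univ.filter (fun a => ¬ a ∈ X))]
  · rw [add_zero]
    have : univ.filter (fun a => a ∈ X) = X := by ext; simp
    rw [this]
    refine Finset.sum_congr rfl fun a ha => ?_
    simp only [ha, true_and]
    rw [← Finset.sum_filter]
    refine Finset.sum_congr ?_ fun _ _ => rfl
    ext; simp
  · intro a ha
    simp at ha
    simp [ha]

lemma cutS_skew [Fintype V] (s : V → V → ℤ) (hs : ∀ v w, s v w = - s w v) (X : Finset V) :
    ∑ v ∈ X, ∑ w, s v w = cutS s X := by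
  have h0 : ∑ v ∈ X, ∑ w ∈ X, s v w = 0 := by
    have h1 : ∑ v ∈ X, ∑ w ∈ X, s v w = ∑ v ∈ X, ∑ w ∈ X, s w v := Finset.sum_comm
    have h2 : ∑ v ∈ X, ∑ w ∈ X, s v w = - ∑ v ∈ X, ∑ w ∈ X, s w v := by
      simp only [← Finset.sum_neg_distrib]
      exact Finset.sum_congr rfl fun a _ => Finset.sum_congr rfl fun b _ => hs a b
    linarith
  unfold cutS
  have : ∀ v, ∑ w, s v w = ∑ w ∈ X, s v w + ∑ w ∈ Xᶜ, s v w := fun v =>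
    (Finset.sum_add_sum_compl X _).symm
  simp only [this, Finset.sum_add_distrib, h0, zero_add]

lemma cutS_submod [Fintype V] (u : V → V → ℤ) (hu : ∀ v w, 0 ≤ u v w + u w v)
    (X Y : Finset V) (a b : V) (haX : a ∈ X) (hbX : b ∉ X) (hbY : b ∈ Y) (haY : a ∉ Y) :
    cutS u (X ∩ Y) + cutS u (X ∪ Y) + (u a b + u b a) ≤ cutS u X + cutS u Y := by
  have h1 : cutS u X + cutS u Y = cutS u (X ∩ Y) + cutS u (X ∪ Y)
      + ∑ a, ∑ b, (if (a ∈ X ∧ a ∉ Y) ∧ (b ∈ Y ∧ b ∉ X) then u a b else 0)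
      + ∑ a, ∑ b, (if (b ∈ X ∧ b ∉ Y) ∧ (a ∈ Y ∧ a ∉ X) then u a b else 0) := by
    simp only [cutS_eq, ← Finset.sum_add_distrib]
    refine Finset.sum_congr rfl fun a _ => Finset.sum_congr rfl fun b _ => ?_
    simp only [Finset.mem_inter, Finset.mem_union]
    by_cases h1 : a ∈ X <;> by_cases h2 : a ∈ Y <;> by_cases h3 : b ∈ X <;>
      by_cases h4 : b ∈ Y <;> simp [h1, h2, h3, h4]
  rw [Finset.sum_comm (f := fun a b =>
    (if (b ∈ X ∧ b ∉ Y) ∧ (a ∈ Y ∧ a ∉ X) then u a b else 0))] at h1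
  rw [add_assoc (cutS u (X ∩ Y) + cutS u (X ∪ Y))] at h1
  simp only [← Finset.sum_add_distrib] at h1
  rw [h1]
  have hn : ∀ x y, 0 ≤ (if (x ∈ X ∧ x ∉ Y) ∧ (y ∈ Y ∧ y ∉ X) then u x y else 0) +
      (if (x ∈ X ∧ x ∉ Y) ∧ (y ∈ Y ∧ y ∉ X) then u y x else 0) := by
    intro x y
    split_ifs
    · exact hu x y
    · simp
  have h2 := Finset.single_le_sum (f := fun x => ∑ y,
      ((if (x ∈ X ∧ x ∉ Y) ∧ (y ∈ Y ∧ y ∉ X) then u x y else 0) +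
      (if (x ∈ X ∧ x ∉ Y) ∧ (y ∈ Y ∧ y ∉ X) then u y x else 0)))
      (fun x _ => Finset.sum_nonneg fun y _ => hn x y) (Finset.mem_univ a)
  have h3 := Finset.single_le_sum (f := fun y =>
      ((if (a ∈ X ∧ a ∉ Y) ∧ (y ∈ Y ∧ y ∉ X) then u a y else 0) +
      (if (a ∈ X ∧ a ∉ Y) ∧ (y ∈ Y ∧ y ∉ X) then u y a else 0)))
      (fun y _ => hn a y) (Finset.mem_univ b)
  simp only [haX, hbX, hbY, haY, not_false_eq_true, and_self, if_true] at h2 h3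
  linarith

/-- decrease the capacity of one arc by one -/
noncomputable def decArc (u : V → V → ℤ) (a b : V) : V → V → ℤ :=
  fun x y => u x y - if x = a ∧ y = b then 1 else 0

lemma cutS_decArc [Fintype V] (u : V → V → ℤ) (a b : V) (X : Finset V) :
    cutS (decArc u a b) X = cutS u X - if a ∈ X ∧ b ∉ X then 1 else 0 := by
  have : ∀ x y : V, (if x = a ∧ y = b then (1:ℤ) else 0)
      = if x = a then (if y = b then 1 else 0) else 0 := by
    intro x y; by_cases x = a <;> by_cases y = b <;> simp_all
  unfold cutS decArc
  simp only [Finset.sum_sub_distrib, this]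
  congr 1
  by_cases h1 : a ∈ X <;> by_cases h2 : b ∈ X <;>
    simp [Finset.sum_ite_irrel, h1, h2]

lemma hoffman [Fintype V] (n : ℕ) : ∀ (u : V → V → ℤ), (∀ v, u v v = 0) →
    (∀ v w, 0 ≤ u v w + u w v) → (∀ X, 0 ≤ cutS u X) →
    (∑ v, ∑ w, (u v w + u w v) ≤ n) →
    ∃ f : V → V → ℤ, (∀ v w, f v w = - f w v) ∧ (∀ v w, f v w ≤ u v w) ∧
      ∀ v, ∑ w, f v w = 0 := by
  induction n with
  | zero =>
    intro u hd hu hc hn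
    have hz : ∀ v w, u v w + u w v = 0 := by
      have h0 : ∑ v, ∑ w, (u v w + u w v) = 0 :=
        le_antisymm (by simpa using hn)
          (Finset.sum_nonneg fun v _ => Finset.sum_nonneg fun w _ => hu v w)
      rw [Finset.sum_eq_zero_iff_of_nonneg
        (fun v _ => Finset.sum_nonneg fun w _ => hu v w)] at h0
      intro v w
      have h1 := h0 v (Finset.mem_univ _)
      rw [Finset.sum_eq_zero_iff_of_nonneg (fun w _ => hu v w)] at h1
      exact h1 w (Finset.mem_univ _)
    have hs : ∀ v w, u v w = - u w v := fun v w => by linarith [hz v w]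
    refine ⟨u, hs, fun _ _ => le_rfl, ?_⟩
    have hp : ∀ v, 0 ≤ ∑ w, u v w := by
      intro v
      have := cutS_skew u hs {v}
      rw [Finset.sum_singleton] at this
      rw [this]; exact hc _
    have ht : ∑ v, ∑ w, u v w = 0 := by
      rw [cutS_skew u hs univ]; simp [cutS]
    rw [Finset.sum_eq_zero_iff_of_nonneg (fun v _ => hp v)] at ht
    exact fun v => ht v (Finset.mem_univ _)
  | succ n ih =>
    intro u hd hu hc hn
    by_cases hz : ∀ v w, u v w + u w v = 0
    · exact ih u hd hu hc (by simp [hz])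
    push Not at hz
    obtain ⟨a, b, hab⟩ := hz
    have hpos : 0 < u a b + u b a := lt_of_le_of_ne (hu a b) (Ne.symm hab)
    have hne : a ≠ b := by rintro rfl; simp [hd] at hab
    have key : ∀ a b, a ≠ b → 0 < u a b + u b a → (∀ X : Finset V, a ∈ X → b ∉ X → 0 < cutS u X) →
        ∃ f : V → V → ℤ, (∀ v w, f v w = - f w v) ∧ (∀ v w, f v w ≤ u v w) ∧
      ∀ v, ∑ w, f v w = 0 := by
      intro a b hne hpos hX
      refine Exists.elim (ih (decArc u a b) ?_ ?_ ?_ ?_) ?_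
      rotate_left 4
      · rintro f ⟨h1, h2, h3⟩
        refine ⟨f, h1, fun v w => (h2 v w).trans ?_, h3⟩
        unfold decArc; split_ifs <;> omega
      · intro v
        have : ¬ (v = a ∧ v = b) := by rintro ⟨rfl, rfl⟩; exact hne rfl
        simp [decArc, hd, this]
      · intro v w
        have := hu v w
        unfold decArc
        by_cases h1 : v = a ∧ w = b
        · obtain ⟨rfl, rfl⟩ := h1
          have : ¬ (w = v ∧ v = w) := by rintro ⟨h, -⟩; exact hne h.symm
          simp [this]; omega
        · by_cases h2 : w = a ∧ v = b
          · obtain ⟨rfl, rfl⟩ := h2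
            simp [h1]; omega
          · simp [h1, h2]; omega
      · intro X
        rw [cutS_decArc]
        split_ifs with h
        · have := hX X h.1 h.2; omega
        · simpa using hc X
      · have e : ∀ v w, decArc u a b v w + decArc u a b w v ≤ u v w + u w v := by
          intro v w; unfold decArc; split_ifs <;> omega
        have : ∑ v, ∑ w, (decArc u a b v w + decArc u a b w v)
            < ∑ v, ∑ w, (u v w + u w v) := by
          refine Finset.sum_lt_sum (fun v _ => Finset.sum_le_sum fun w _ => e v w)
            ⟨a, Finset.mem_univ _, ?_⟩
          refine Finset.sum_lt_sum (fun w _ => e a w) ⟨b, Finset.mem_univ _, ?_⟩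
          unfold decArc; simp; split_ifs <;> omega
        push_cast at hn; omega
    by_cases hX : ∀ X : Finset V, a ∈ X → b ∉ X → 0 < cutS u X
    · exact key a b hne hpos hX
    by_cases hY : ∀ X : Finset V, b ∈ X → a ∉ X → 0 < cutS u X
    · exact key b a hne.symm (by omega) hY
    push Not at hX hY
    obtain ⟨X, h1, h2, h3⟩ := hX
    obtain ⟨Y, h4, h5, h6⟩ := hY
    have := cutS_submod u hu X Y a b h1 h2 h4 h5
    have := hc (X ∩ Y)
    have := hc (X ∪ Y)
    omega

lemma edgeCut_ncard [Fintype V] (G : SimpleGraph V) (D : V → V → Prop)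
    (h1 : ∀ v w, D v w → G.Adj v w) (h2 : ∀ v w, G.Adj v w → (D v w ↔ ¬ D w v))
    (X : Finset V) :
    ((edgeCut G (X : Set V)).ncard : ℤ) =
      cutS (fun v w => if D v w then 1 else 0) X + cutS (fun v w => if D w v then 1 else 0) X := by
  have e : edgeCut G (X : Set V) =
      (((X ×ˢ Xᶜ).filter (fun p => G.Adj p.1 p.2)).image (fun p => s(p.1, p.2)) : Finset (Sym2 V)) := by
    ext e
    simp only [edgeCut, Set.mem_ofPred_eq, Finset.coe_image, Set.mem_image, Finset.mem_coe,
      Finset.mem_filter, Finset.mem_product, Finset.mem_compl, Prod.exists]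
    constructor
    · rintro ⟨h, a, b, rfl, ha, hb⟩
      exact ⟨a, b, ⟨⟨ha, hb⟩, h⟩, rfl⟩
    · rintro ⟨a, b, ⟨⟨ha, hb⟩, h⟩, rfl⟩
      exact ⟨h, a, b, rfl, ha, hb⟩
  rw [e, Set.ncard_coe_finset, Finset.card_image_of_injOn]
  · rw [Finset.card_filter, Finset.sum_product]
    unfold cutS
    push_cast
    simp only [← Finset.sum_add_distrib]
    refine Finset.sum_congr rfl fun a _ => Finset.sum_congr rfl fun b _ => ?_
    have := h1 a b
    have := fun h => (h1 b a h).symm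
    have := h2 a b
    grind
  · rintro ⟨a, b⟩ hab ⟨c, d⟩ hcd h
    simp at hab hcd h
    rcases h with h | ⟨rfl, rfl⟩
    · simp [h]
    · exact absurd hab.1.1 hcd.1.2

lemma outdeg_eq [Fintype V] (G : SimpleGraph V) (D : V → V → Prop)
    (h1 : ∀ v w, D v w → G.Adj v w) (h2 : ∀ v w, G.Adj v w → (D v w ↔ ¬ D w v)) (v : V) :
    2 * (({w | D v w}.ncard : ℕ) : ℤ) - ((G.neighborSet v).ncard : ℤ) =
      ∑ w, ((if D v w then 1 else 0) - (if D w v then 1 else 0)) := by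
  have a1 : {w | D v w} = (univ.filter (fun w => D v w) : Finset V) := by ext; simp
  have a2 : G.neighborSet v = (univ.filter (fun w => G.Adj v w) : Finset V) := by ext; simp
  rw [a1, a2, Set.ncard_coe_finset, Set.ncard_coe_finset, Finset.card_filter, Finset.card_filter]
  push_cast
  rw [Finset.mul_sum, ← Finset.sum_sub_distrib]
  refine Finset.sum_congr rfl fun b _ => ?_
  have := h1 v b
  have := fun h => (h1 b v h).symm
  have := h2 v b
  grind

lemma balanced_iff [Fintype V] (G : SimpleGraph V) (k : ℕ) (hk : 3 ≤ k) (D : V → V → Prop)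
    (h1 : ∀ v w, D v w → G.Adj v w) (h2 : ∀ v w, G.Adj v w → (D v w ↔ ¬ D w v)) :
    BalancedValuation G (fun v =>
          ((k : ℝ) / ((k : ℝ) - 2)) *
            (2 * ({w | D v w}.ncard : ℝ) - ((G.neighborSet v).ncard : ℝ))) ↔
    ∀ X : Finset V,
      cutS (fun v w => if D v w then 1 else 0) X ≤
        ((k : ℤ) - 1) * cutS (fun v w => if D w v then 1 else 0) X ∧
      cutS (fun v w => if D w v then 1 else 0) X ≤
        ((k : ℤ) - 1) * cutS (fun v w => if D v w then 1 else 0) X := by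
  have hX : ∀ X : Finset V, (|∑ᶠ v ∈ (X : Set V), ((k : ℝ) / ((k : ℝ) - 2)) *
            (2 * ({w | D v w}.ncard : ℝ) - ((G.neighborSet v).ncard : ℝ))|
            ≤ ((edgeCut G (X : Set V)).ncard : ℝ)) ↔ (cutS (fun v w => if D v w then 1 else 0) X ≤
        ((k : ℤ) - 1) * cutS (fun v w => if D w v then 1 else 0) X ∧
      cutS (fun v w => if D w v then 1 else 0) X ≤
        ((k : ℤ) - 1) * cutS (fun v w => if D v w then 1 else 0) X) := by
    intro X
    have e1 := edgeCut_ncard G D h1 h2 X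
    have e2 : ∑ v ∈ X, (2 * (({w | D v w}.ncard : ℕ) : ℤ) - ((G.neighborSet v).ncard : ℤ)) =
        cutS (fun v w => if D v w then 1 else 0) X
          - cutS (fun v w => if D w v then 1 else 0) X := by
      simp only [outdeg_eq G D h1 h2]
      rw [cutS_skew (fun v w => (if D v w then 1 else 0) - (if D w v then 1 else 0))
        (fun v w => by ring)]
      simp [cutS, Finset.sum_sub_distrib]
    rw [finsum_mem_coe_finset, ← Finset.mul_sum]
    generalize cutS (fun v w => if D v w then 1 else 0) X = p at *
    generalize cutS (fun v w => if D w v then 1 else 0) X = q at *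
    have e1' : ((edgeCut G (X : Set V)).ncard : ℝ) = p + q := by exact_mod_cast e1
    have e2' : ∑ v ∈ X, (2 * ({w | D v w}.ncard : ℝ) - ((G.neighborSet v).ncard : ℝ))
        = p - q := by exact_mod_cast e2
    rw [e1', e2', abs_le]
    have hk' : (0:ℝ) < (k:ℝ) - 2 := by
      have : (3:ℝ) ≤ k := by exact_mod_cast hk
      linarith
    have hA : (p ≤ ((k : ℤ) - 1) * q) ↔ ((p:ℝ) ≤ ((k:ℝ) - 1) * q) := by
      rw [← Int.cast_le (R := ℝ)]; push_cast; rfl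
    have hB : (q ≤ ((k : ℤ) - 1) * p) ↔ ((q:ℝ) ≤ ((k:ℝ) - 1) * p) := by
      rw [← Int.cast_le (R := ℝ)]; push_cast; rfl
    rw [hA, hB, div_mul_eq_mul_div, le_div_iff₀ hk', div_le_iff₀ hk', and_comm]
    constructor
    · rintro ⟨ha, hb⟩; constructor <;> linarith
    · rintro ⟨ha, hb⟩; constructor <;> linarith
  constructor
  · intro h X
    exact (hX X).1 (h X)
  · intro h X
    have := (hX X.toFinset).2 (h _)
    simpa using this

end Aux

theorem statement1 [Fintype V] (G : SimpleGraph V) (k : ℕ) (hk : 3 ≤ k) :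
    HasNowhereZeroFlow G k ↔
      ∃ D : V → V → Prop,
        (∀ v w, D v w → G.Adj v w) ∧
        (∀ v w, G.Adj v w → (D v w ↔ ¬ D w v)) ∧
        BalancedValuation G (fun v =>
          ((k : ℝ) / ((k : ℝ) - 2)) *
            (2 * ({w | D v w}.ncard : ℝ) - ((G.neighborSet v).ncard : ℝ))) := by
  classical
  constructor
  · rintro ⟨f, hs, hb, hz, hf⟩
    obtain ⟨D, hD⟩ : ∃ D : V → V → Prop, ∀ v w, D v w ↔ 0 < f v w := ⟨_, fun _ _ => Iff.rfl⟩
    have h1 : ∀ v w, D v w → G.Adj v w := by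
      intro v w h
      rw [hD] at h
      by_contra hn
      rw [hz v w hn] at h
      exact lt_irrefl _ h
    have h2 : ∀ v w, G.Adj v w → (D v w ↔ ¬ D w v) := by
      intro v w h
      rw [hD, hD]
      have := (hb v w h).1
      have := hs v w
      omega
    refine ⟨D, h1, h2, ?_⟩
    rw [balanced_iff G k hk _ h1 h2]
    intro X
    have hc : cutS f X = 0 := by
      rw [← cutS_skew f hs X]; simp [hf]
    have hbd : ∀ v w, f v w ≤ ((k : ℤ) - 1) * (if D v w then 1 else 0)
        - (if D w v then 1 else 0) := by
      intro v w
      have := hs v w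
      have e1 := hD v w
      have e2 := hD w v
      by_cases h : G.Adj v w
      · have := hb v w h
        by_cases d1 : D v w <;> by_cases d2 : D w v <;>
          simp only [d1, d2, true_iff, false_iff, if_true, if_false] at e1 e2 ⊢ <;> omega
      · have := hz v w h
        by_cases d1 : D v w <;> by_cases d2 : D w v <;>
          simp only [d1, d2, true_iff, false_iff, if_true, if_false] at e1 e2 ⊢ <;> omega
    have hle : ∀ a b : V → V → ℤ, (∀ v w, a v w ≤ b v w) → cutS a X ≤ cutS b X :=
      fun a b h => Finset.sum_le_sum fun v _ => Finset.sum_le_sum fun w _ => h v w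
    have hlin : ∀ a b : V → V → ℤ, cutS (fun v w => ((k : ℤ) - 1) * a v w - b v w) X
        = ((k : ℤ) - 1) * cutS a X - cutS b X := by
      intro a b; simp [cutS, Finset.sum_sub_distrib, Finset.mul_sum]
    have c1 := hle f _ hbd
    have hneg : cutS (fun v w => f w v) X = 0 := by
      have : (fun v w => f w v) = fun v w => - f v w := by
        funext v w; exact hs w v
      rw [this]
      have : cutS (fun v w => - f v w) X = - cutS f X := by simp [cutS]
      rw [this, hc, neg_zero]
    have c2 := hle (fun v w => f w v) _ (fun v w => hbd w v)
    rw [hlin] at c1 c2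
    rw [hc] at c1
    rw [hneg] at c2
    constructor <;> linarith
  · rintro ⟨D, h1, h2, hbal⟩
    rw [balanced_iff G k hk _ h1 h2] at hbal
    have hasym : ∀ v w, D v w → ¬ D w v := fun v w h => (h2 v w (h1 v w h)).1 h
    have hlin : ∀ (a b : V → V → ℤ) X, cutS (fun v w => ((k : ℤ) - 1) * a v w - b v w) X
        = ((k : ℤ) - 1) * cutS a X - cutS b X := by
      intro a b X; simp [cutS, Finset.sum_sub_distrib, Finset.mul_sum]
    refine Exists.elim (hoffman _ (fun v w => ((k : ℤ) - 1) * (if D v w then 1 else 0)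
        - (if D w v then 1 else 0)) ?_ ?_ ?_ (Int.self_le_toNat _)) ?_
    rotate_left 3
    · rintro f ⟨hs, hu, hf⟩
      have key : ∀ v w, f v w ≤ ((k : ℤ) - 1) * (if D v w then 1 else 0)
        - (if D w v then 1 else 0) := hu
      refine ⟨f, hs, ?_, ?_, hf⟩
      · intro v w h
        have a1 := key v w
        have a2 := key w v
        have a3 := hs v w
        have a4 := h2 v w h
        by_cases hd : D v w
        · have := a4.1 hd
          simp only [hd, this, if_true, if_false] at a1 a2
          omega
        · have : D w v := by tauto
          simp only [hd, this, if_true, if_false] at a1 a2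
          omega
      · intro v w h
        have a1 := key v w
        have a2 := key w v
        have a3 := hs v w
        have b1 : ¬ D v w := fun h' => h (h1 v w h')
        have b2 : ¬ D w v := fun h' => h (h1 w v h').symm
        simp only [b1, b2, if_false] at a1 a2
        omega
    · intro v
      have : ¬ D v v := fun h => hasym v v h h
      simp [this]
    · intro v w
      have := hasym v w
      by_cases hd : D v w <;> by_cases hd' : D w v <;> simp [hd, hd'] <;> first | omega | tauto
    · intro X
      rw [hlin]
      have := (hbal X).2
      convert sub_nonneg.2 this
end

section
/- A cubic graph G has a nowhere-zero 5-flow if and only if G admits a balanced valuation taking only the values −5/3 and +5/3; equivalently, if and only if there is a partition V(G) = A ∪ B such that (5/3)·| |X∩A| − |X∩B| | ≤ |∂_G(X)| for every X ⊆ V(G). -/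
open SimpleGraph

variable {V : Type*}

/-- Total capacity of the arcs leaving `X`. -/
noncomputable def cutZ [Fintype V] (c : V → V → ℤ) (X : Finset V) : ℤ :=
  open Classical in ∑ u, ∑ w, if u ∈ X ∧ w ∉ X then c u w else 0

theorem cutZ_skew [Fintype V] (g : V → V → ℤ) (hg : ∀ v w, g v w = - g w v) (X : Finset V) :
    ∑ v ∈ X, ∑ w, g v w = cutZ g X := by
  classical
  have h0 : ∑ u, ∑ w, (if u ∈ X ∧ w ∈ X then g u w else 0) = 0 := by
    have : ∑ u, ∑ w, (if u ∈ X ∧ w ∈ X then g u w else 0)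
        = - ∑ u, ∑ w, (if u ∈ X ∧ w ∈ X then g u w else 0) := by
      conv_lhs => rw [Finset.sum_comm]
      simp only [← Finset.sum_neg_distrib]
      refine Finset.sum_congr rfl fun u _ => Finset.sum_congr rfl fun w _ => ?_
      have := hg w u
      split_ifs <;> first | tauto | omega
    omega
  have h1 : ∑ v ∈ X, ∑ w, g v w = ∑ u, ∑ w, (if u ∈ X then g u w else 0) := by
    rw [← Finset.sum_filter_add_sum_filter_not Finset.univ (· ∈ X)
      (fun u => ∑ w, (if u ∈ X then g u w else 0))]
    rw [Finset.sum_eq_zero (s := Finset.univ.filter (¬ · ∈ X)) (by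
      intro x hx; simp at hx; simp [hx])]
    simp only [add_zero]
    rw [show Finset.univ.filter (· ∈ X) = X by ext; simp]
    refine Finset.sum_congr rfl fun u hu => ?_
    simp [hu]
  suffices h : ∑ u, ∑ w, (if u ∈ X then g u w else 0)
      = cutZ g X + ∑ u, ∑ w, (if u ∈ X ∧ w ∈ X then g u w else 0) by
    rw [h1, h, h0, add_zero]
  rw [cutZ, ← Finset.sum_add_distrib]
  refine Finset.sum_congr rfl fun u _ => ?_
  rw [← Finset.sum_add_distrib]
  refine Finset.sum_congr rfl fun w _ => ?_
  by_cases h : u ∈ X <;> by_cases h' : w ∈ X <;> simp [h, h']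

theorem cutZ_submod [Fintype V] [DecidableEq V] (c : V → V → ℤ) (hc : ∀ v w, 0 ≤ c v w + c w v)
    (X Y : Finset V) (v w : V) (hv : v ∈ X) (hv' : v ∉ Y) (hw : w ∉ X) (hw' : w ∈ Y) :
    cutZ c (X ∩ Y) + cutZ c (X ∪ Y) + (c v w + c w v) ≤ cutZ c X + cutZ c Y := by
  classical
  have key : cutZ c X + cutZ c Y = cutZ c (X ∩ Y) + cutZ c (X ∪ Y) +
      ∑ u, ∑ z, (if (u ∈ X ∧ u ∉ Y) ∧ (z ∉ X ∧ z ∈ Y) then c u z + c z u else 0) := by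
    have e : ∑ u, ∑ z, (if (u ∈ X ∧ u ∉ Y) ∧ (z ∉ X ∧ z ∈ Y) then c u z + c z u else 0)
      = ∑ u, ∑ z, (if (u ∈ X ∧ u ∉ Y) ∧ (z ∉ X ∧ z ∈ Y) then c u z else 0)
        + ∑ u, ∑ z, (if (z ∈ X ∧ z ∉ Y) ∧ (u ∉ X ∧ u ∈ Y) then c u z else 0) := by
      rw [Finset.sum_comm (f := fun u z =>
        (if (z ∈ X ∧ z ∉ Y) ∧ (u ∉ X ∧ u ∈ Y) then c u z else 0)), ← Finset.sum_add_distrib]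
      refine Finset.sum_congr rfl fun u _ => ?_
      rw [← Finset.sum_add_distrib]
      refine Finset.sum_congr rfl fun w _ => ?_
      split_ifs <;> simp
    rw [e]
    unfold cutZ
    simp only [← Finset.sum_add_distrib]
    refine Finset.sum_congr rfl fun u _ => Finset.sum_congr rfl fun z _ => ?_
    by_cases h1 : u ∈ X <;> by_cases h2 : z ∈ X <;> by_cases h3 : u ∈ Y <;>
      by_cases h4 : z ∈ Y <;> simp [h1, h2, h3, h4]
  have hnn : ∀ u z, 0 ≤ (if (u ∈ X ∧ u ∉ Y) ∧ (z ∉ X ∧ z ∈ Y) then c u z + c z u else 0) := by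
    intro u z
    split_ifs
    · exact hc u z
    · exact le_rfl
  have h1 := Finset.single_le_sum (f := fun u => ∑ z,
    (if (u ∈ X ∧ u ∉ Y) ∧ (z ∉ X ∧ z ∈ Y) then c u z + c z u else 0))
    (fun u _ => Finset.sum_nonneg fun z _ => hnn u z) (Finset.mem_univ v)
  have h2 := Finset.single_le_sum (f := fun z =>
    (if (v ∈ X ∧ v ∉ Y) ∧ (z ∉ X ∧ z ∈ Y) then c v z + c z v else 0))
    (fun z _ => hnn v z) (Finset.mem_univ w)
  simp only [hv, hv', hw, hw', not_false_eq_true, and_self, if_true] at h2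
  simp only [hv, hv', not_false_eq_true, and_self, true_and] at h1
  simp only [true_and] at h2
  omega

theorem cutZ_dec [Fintype V] [DecidableEq V] (c : V → V → ℤ) (X : Finset V) (v w : V) :
    cutZ (fun a b => c a b - if a = v ∧ b = w then 1 else 0) X
      = cutZ c X - if v ∈ X ∧ w ∉ X then 1 else 0 := by
  classical
  have : ∑ u, ∑ z, (if u = v ∧ z = w then (if v ∈ X ∧ w ∉ X then (1:ℤ) else 0) else 0)
      = if v ∈ X ∧ w ∉ X then 1 else 0 := by
    simp only [ite_and, Finset.sum_ite_irrel, Finset.sum_const_zero]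
    simp
  rw [← this]
  unfold cutZ
  simp only [← Finset.sum_sub_distrib]
  refine Finset.sum_congr rfl fun u _ => Finset.sum_congr rfl fun z _ => ?_
  by_cases h : u = v ∧ z = w
  · obtain ⟨rfl, rfl⟩ := h
    simp only [and_self, if_true]
    split_ifs <;> simp
  · simp only [h, if_false, sub_zero]
    congr

/-- Integral Hoffman-type theorem on flows with prescribed divergence. -/
theorem hoffmanZ [Fintype V] (b : V → ℤ) (hb : ∑ v, b v = 0) (n : ℕ) :
    ∀ c : V → V → ℤ, (∀ v w, 0 ≤ c v w + c w v) → (∑ v, ∑ w, (c v w + c w v)).toNat ≤ n →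
    (∀ X : Finset V, ∑ v ∈ X, b v ≤ cutZ c X) →
    ∃ g : V → V → ℤ, (∀ v w, g v w = - g w v) ∧ (∀ v w, g v w ≤ c v w) ∧
      ∀ v, ∑ w, g v w = b v := by
  classical
  induction n with
  | zero =>
    intro c hc hn hX
    have hs : ∑ v, ∑ w, (c v w + c w v) = 0 :=
      le_antisymm (by omega) (Finset.sum_nonneg fun v _ => Finset.sum_nonneg fun w _ => hc v w)
    have hskew : ∀ v w, c v w = - c w v := by
      intro v w
      have h1 := (Finset.sum_eq_zero_iff_of_nonneg
        (fun v _ => Finset.sum_nonneg fun w _ => hc v w)).1 hs v (Finset.mem_univ v)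
      have h2 := (Finset.sum_eq_zero_iff_of_nonneg (fun w _ => hc v w)).1 h1 w (Finset.mem_univ w)
      omega
    refine ⟨c, hskew, fun _ _ => le_rfl, ?_⟩
    have hle : ∀ v ∈ Finset.univ, b v ≤ ∑ w, c v w := by
      intro v _
      have := hX {v}
      rw [← cutZ_skew c hskew] at this
      simpa using this
    have htot : ∑ v, b v = ∑ v, ∑ w, c v w := by
      rw [hb, cutZ_skew c hskew]; simp [cutZ]
    intro v
    exact ((Finset.sum_eq_sum_iff_of_le hle).1 htot v (Finset.mem_univ v)).symm
  | succ n ih =>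
    intro c hc hn hX
    by_cases hall : ∀ v w, c v w + c w v = 0
    · exact ih c hc (by simp [hall]) hX
    push Not at hall
    obtain ⟨v, w, hvw⟩ := hall
    have hpos : 0 < c v w + c w v := lt_of_le_of_ne (hc v w) (Ne.symm hvw)
    -- reducing one arc whose tight sets are absent
    have red : ∀ v w, 0 < c v w + c w v →
        (∀ X : Finset V, v ∈ X → w ∉ X → ∑ v ∈ X, b v < cutZ c X) →
        ∃ g : V → V → ℤ, (∀ v w, g v w = - g w v) ∧ (∀ v w, g v w ≤ c v w) ∧
          ∀ v, ∑ w, g v w = b v := by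
      intro v w hp ht
      by_cases hdiag : v = w
      · subst hdiag
        obtain ⟨g, h1, h2, h3⟩ := ih (fun a b => c a b - if a = v ∧ b = v then 1 else 0) (by
          intro x y
          have := hc x y
          by_cases hx : x = v ∧ y = v
          · obtain ⟨rfl, rfl⟩ := hx; simp; omega
          · have : ¬ (y = v ∧ x = v) := by tauto
            simp [hx, this]; omega) (by
          have : ∑ x, ∑ y, ((c x y - if x = v ∧ y = v then 1 else 0) +
              (c y x - if y = v ∧ x = v then 1 else 0)) < ∑ x, ∑ y, (c x y + c y x) := by
            refine Finset.sum_lt_sum (fun x _ => Finset.sum_le_sum fun y _ => by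
              split_ifs <;> omega) ⟨v, Finset.mem_univ v, Finset.sum_lt_sum (fun y _ => by
              split_ifs <;> omega) ⟨v, Finset.mem_univ v, by simp; omega⟩⟩
          omega) (by
          intro X
          rw [cutZ_dec]
          have := hX X
          split_ifs with h
          · exact absurd h.1 h.2
          · omega)
        exact ⟨g, h1, fun x y => (h2 x y).trans (by split_ifs <;> omega), h3⟩
      · obtain ⟨g, h1, h2, h3⟩ := ih (fun a b => c a b - if a = v ∧ b = w then 1 else 0) (by
          intro x y
          have := hc x y
          by_cases hx : x = v ∧ y = w
          · obtain ⟨rfl, rfl⟩ := hx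
            have : ¬ (y = x ∧ x = y) := by tauto
            simp [this]; omega
          · by_cases hy : y = v ∧ x = w
            · obtain ⟨rfl, rfl⟩ := hy
              simp [hx]; omega
            · simp [hx, hy]; omega) (by
          have : ∑ x, ∑ y, ((c x y - if x = v ∧ y = w then 1 else 0) +
              (c y x - if y = v ∧ x = w then 1 else 0)) < ∑ x, ∑ y, (c x y + c y x) := by
            refine Finset.sum_lt_sum (fun x _ => Finset.sum_le_sum fun y _ => by
              split_ifs <;> omega) ⟨v, Finset.mem_univ v, Finset.sum_lt_sum (fun y _ => by
              split_ifs <;> omega) ⟨w, Finset.mem_univ w, by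
                have : ¬ (w = v ∧ v = w) := by tauto
                simp [this]⟩⟩
          omega) (by
          intro X
          rw [cutZ_dec]
          have := hX X
          split_ifs with h
          · have := ht X h.1 h.2; omega
          · omega)
        exact ⟨g, h1, fun x y => (h2 x y).trans (by split_ifs <;> omega), h3⟩
    by_cases hA : ∀ X : Finset V, v ∈ X → w ∉ X → ∑ v ∈ X, b v < cutZ c X
    · exact red v w hpos hA
    by_cases hB : ∀ X : Finset V, w ∈ X → v ∉ X → ∑ v ∈ X, b v < cutZ c X
    · exact red w v (by omega) hB
    exfalso
    push Not at hA hB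
    obtain ⟨X, hvX, hwX, hXt⟩ := hA
    obtain ⟨Y, hwY, hvY, hYt⟩ := hB
    have h1 := cutZ_submod c hc X Y v w hvX hvY hwX hwY
    have h2 := hX (X ∩ Y)
    have h3 := hX (X ∪ Y)
    have h4 := Finset.sum_union_inter (s₁ := X) (s₂ := Y) (f := b)
    omega

theorem cutZ_lin [Fintype V] (c d : V → V → ℤ) (x y : ℤ) (X : Finset V) :
    cutZ (fun u w => x * c u w + y * d u w) X = x * cutZ c X + y * cutZ d X := by
  unfold cutZ
  simp only [Finset.mul_sum, ← Finset.sum_add_distrib]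
  refine Finset.sum_congr rfl fun u _ => Finset.sum_congr rfl fun z _ => ?_
  split_ifs <;> simp

theorem cutZ_mono [Fintype V] (c d : V → V → ℤ) (h : ∀ u w, c u w ≤ d u w) (X : Finset V) :
    cutZ c X ≤ cutZ d X := by
  unfold cutZ
  refine Finset.sum_le_sum fun u _ => Finset.sum_le_sum fun z _ => ?_
  split_ifs
  · exact h u z
  · exact le_rfl

/-- Adjacency indicator. -/
noncomputable def adjZ (G : SimpleGraph V) (u w : V) : ℤ :=
  open Classical in if G.Adj u w then 1 else 0

theorem adjZ_sum [Fintype V] (G : SimpleGraph V) (hcubic : IsCubic G) (v : V) :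
    ∑ w, adjZ G v w = 3 := by
  classical
  have := hcubic v
  unfold adjZ
  rw [Finset.sum_boole]
  rw [Set.ncard_eq_toFinset_card'] at this
  rw [show Finset.univ.filter (fun w => G.Adj v w) = (G.neighborSet v).toFinset by ext; simp, this]
  rfl

theorem cutZ_adj [Fintype V] (G : SimpleGraph V) (X : Finset V) :
    cutZ (adjZ G) X = ((edgeCut G (X : Set V)).ncard : ℤ) := by
  classical
  have h1 : cutZ (adjZ G) X = (((Finset.univ : Finset (V × V)).filter
      (fun q => (q.1 ∈ X ∧ q.2 ∉ X) ∧ G.Adj q.1 q.2)).card : ℤ) := by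
    unfold cutZ adjZ
    rw [← Finset.sum_boole, Fintype.sum_prod_type]
    refine Finset.sum_congr rfl fun u _ => Finset.sum_congr rfl fun z _ => ?_
    by_cases h : u ∈ X ∧ z ∉ X <;> simp [h]
  have h2 : edgeCut G (X : Set V) = (((Finset.univ : Finset (V × V)).filter
      (fun q => (q.1 ∈ X ∧ q.2 ∉ X) ∧ G.Adj q.1 q.2)).image (fun q => s(q.1, q.2)) :
        Finset (Sym2 V)) := by
    ext e
    simp only [edgeCut, Set.mem_ofPred_eq, Finset.coe_image, Finset.coe_filter, Set.mem_image,
      Finset.mem_univ, true_and, Prod.exists, Finset.mem_coe]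
    constructor
    · rintro ⟨he, a, b, rfl, ha, hb⟩
      exact ⟨a, b, ⟨⟨ha, hb⟩, he⟩, rfl⟩
    · rintro ⟨a, b, ⟨⟨ha, hb⟩, he⟩, rfl⟩
      exact ⟨he, a, b, rfl, ha, hb⟩
  rw [h1, h2, Set.ncard_coe_finset, Finset.card_image_of_injOn]
  rintro ⟨a, b⟩ hab ⟨a', b'⟩ hab' h
  simp at hab hab' h
  rcases h with h | ⟨rfl, rfl⟩
  · simp [h]
  · exact absurd hab.1.1 hab'.1.2

theorem core5 [Fintype V] (G : SimpleGraph V) (hcubic : IsCubic G) :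
    HasNowhereZeroFlow G 5 ↔ ∃ p : V → ℤ, (∀ v, p v = 1 ∨ p v = -1) ∧
      ∀ X : Finset V, 5 * |∑ v ∈ X, p v| ≤ 3 * cutZ (adjZ G) X := by
  classical
  have ha := adjZ_sum G hcubic
  have hasymm : ∀ u w, adjZ G u w = adjZ G w u := by
    intro u w; simp [adjZ, G.adj_comm]
  constructor
  · rintro ⟨f, hskew, hadj, hnadj, hdiv⟩
    have hb : ∀ v w, 5 * (f v w).sign + (-3) * adjZ G v w ≤ 2 * f v w + 0 * f v w ∧
        2 * f v w + 0 * f v w ≤ 5 * (f v w).sign + 3 * adjZ G v w ∧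
          ((f v w).sign - adjZ G v w) % 2 = 0 := by
      intro v w
      by_cases h : G.Adj v w
      · obtain ⟨h1, h2⟩ := hadj v w h
        simp only [adjZ, h, if_true]
        rcases lt_or_gt_of_ne h1 with h3 | h3
        · rw [Int.sign_eq_neg_one_of_neg h3]; omega
        · rw [Int.sign_eq_one_of_pos h3]; omega
      · simp [adjZ, h, hnadj v w h]
    have hss : ∀ v w, (f v w).sign = - (f w v).sign := by
      intro v w; rw [hskew v w, Int.sign_neg]
    refine ⟨fun v => ∑ w, (f v w).sign, ?_, ?_⟩
    · intro v
      have h1 : ∑ w, (5 * (f v w).sign + (-3) * adjZ G v w) ≤ ∑ w, (2 * f v w + 0 * f v w) :=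
        Finset.sum_le_sum fun w _ => (hb v w).1
      have h2 : ∑ w, (2 * f v w + 0 * f v w) ≤ ∑ w, (5 * (f v w).sign + 3 * adjZ G v w) :=
        Finset.sum_le_sum fun w _ => (hb v w).2.1
      simp only [Finset.sum_add_distrib, ← Finset.mul_sum, ha, hdiv] at h1 h2
      have h3 : (2:ℤ) ∣ ∑ w, ((f v w).sign - adjZ G v w) :=
        Finset.dvd_sum fun w _ => Int.dvd_of_emod_eq_zero (hb v w).2.2
      rw [Finset.sum_sub_distrib, ha] at h3
      show ∑ w, (f v w).sign = 1 ∨ ∑ w, (f v w).sign = -1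
      omega
    · intro X
      have e1 := cutZ_skew (fun v w => (f v w).sign) hss X
      have e2 := cutZ_skew f hskew X
      simp only [hdiv, Finset.sum_const_zero] at e2
      have h1 := cutZ_mono _ _ (fun v w => (hb v w).1) X
      have h2 := cutZ_mono _ _ (fun v w => (hb v w).2.1) X
      simp only [cutZ_lin] at h1 h2
      rw [← e2] at h1 h2
      show 5 * |∑ v ∈ X, ∑ w, (f v w).sign| ≤ _
      rw [e1]
      rcases abs_cases (cutZ (fun v w => (f v w).sign) X) with ⟨h, _⟩ | ⟨h, _⟩ <;> rw [h] <;>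
        omega
  · rintro ⟨p, hp, hX⟩
    let en := Fintype.equivFin V
    -- a reference orientation
    let c₁ : V → V → ℤ := fun u w => if G.Adj u w ∧ en u < en w then 1 else 0
    let r : V → V → ℤ := fun u w => c₁ u w - c₁ w u
    have hc₁ : ∀ u w, (c₁ u w = 0 ∨ c₁ u w = 1) ∧ c₁ u w + c₁ w u = adjZ G u w := by
      intro u w
      have hadj : G.Adj w u ↔ G.Adj u w := G.adj_comm w u
      by_cases h : G.Adj u w
      · have hne : en u ≠ en w := fun h' => h.ne (en.injective h')
        rcases lt_or_gt_of_ne hne with h' | h'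
        · simp [c₁, adjZ, h, hadj, h', h'.le.not_gt]
        · simp [c₁, adjZ, h, hadj, h', h'.le.not_gt]
      · simp [c₁, adjZ, h, hadj]
    have hr : ∀ u w, r u w = - r w u := by intro u w; simp [r]
    have hrc : ∀ u w, 2 * c₁ u w + 0 * c₁ u w = 1 * r u w + 1 * adjZ G u w := by
      intro u w
      have := (hc₁ u w).2
      simp only [r]; omega
    have hptot : ∑ v, p v = 0 := by
      have := hX Finset.univ
      have h0 : cutZ (adjZ G) Finset.univ = 0 := by simp [cutZ]
      rw [h0] at this
      have := abs_nonneg (∑ v, p v)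
      exact abs_eq_zero.1 (by omega)
    have hrtot : ∑ v, ∑ w, r v w = 0 := by
      rw [cutZ_skew r hr]; simp [cutZ]
    have hpar : ∀ v, ∃ b : ℤ, 2 * b = p v + ∑ w, r v w := by
      intro v
      have : ∑ w, (2 * c₁ v w + 0 * c₁ v w) = ∑ w, (1 * r v w + 1 * adjZ G v w) :=
        Finset.sum_congr rfl fun w _ => hrc v w
      simp only [Finset.sum_add_distrib, ← Finset.mul_sum, ha] at this
      rcases hp v with h | h
      · exact ⟨∑ w, c₁ v w - 1, by omega⟩
      · exact ⟨∑ w, c₁ v w - 2, by omega⟩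
    choose b hb using hpar
    have hbX : ∀ X : Finset V, 2 * ∑ v ∈ X, b v = ∑ v ∈ X, p v + ∑ v ∈ X, ∑ w, r v w := by
      intro X
      rw [Finset.mul_sum, ← Finset.sum_add_distrib]
      exact Finset.sum_congr rfl fun v _ => hb v
    obtain ⟨g, hg1, hg2, hg3⟩ := hoffmanZ b (by have := hbX Finset.univ; omega) _ c₁ (by
      intro u w
      have h1 := (hc₁ u w).1
      have h2 := (hc₁ w u).1
      omega) le_rfl (by
      intro X
      have h1 := hbX X
      rw [cutZ_skew r hr] at h1
      have h2 : cutZ (fun u w => 2 * c₁ u w + 0 * c₁ u w) X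
          = cutZ (fun u w => 1 * r u w + 1 * adjZ G u w) X := by simp only [hrc]
      rw [cutZ_lin, cutZ_lin] at h2
      have h3 := hX X
      have h4 := le_abs_self (∑ v ∈ X, p v)
      have h5 := abs_nonneg (∑ v ∈ X, p v)
      omega)
    let o : V → V → ℤ := fun u w => 2 * g u w - r u w
    have ho : ∀ u w, o u w = - o w u := by
      intro u w
      have h1 := hg1 u w
      have h2 := hr u w
      simp only [o]; omega
    have hodiv : ∀ v, ∑ w, o v w = p v := by
      intro v
      simp only [o, Finset.sum_sub_distrib, ← Finset.mul_sum, hg3]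
      have := hb v
      omega
    have hoadj : ∀ u w, (G.Adj u w → o u w = 1 ∨ o u w = -1) ∧ (¬ G.Adj u w → o u w = 0) := by
      intro u w
      have h1 := hg1 u w
      have h2 := hg2 u w
      have h3 := hg2 w u
      obtain ⟨h4, h5⟩ := hc₁ u w
      obtain ⟨h6, h7⟩ := hc₁ w u
      constructor
      · intro h
        simp only [adjZ, h, if_true] at h5
        simp only [o, r]; omega
      · intro h
        simp only [adjZ, h, if_false] at h5
        simp only [o, r]; omega
    let c₂ : V → V → ℤ := fun u w => if o u w = 1 then 4 else if o u w = -1 then -1 else 0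
    have hc₂ : ∀ u w, 2 * c₂ u w + 0 * c₂ u w = 5 * o u w + 3 * adjZ G u w := by
      intro u w
      by_cases h : G.Adj u w
      · rcases (hoadj u w).1 h with h' | h' <;> simp [c₂, h', adjZ, h]
      · simp [c₂, (hoadj u w).2 h, adjZ, h]
    obtain ⟨φ, hφ1, hφ2, hφ3⟩ := hoffmanZ (fun _ : V => (0:ℤ)) (by simp) _ c₂ (by
      intro u w
      have h1 := hc₂ u w
      have h2 := hc₂ w u
      have h3 := ho u w
      have h4 : 0 ≤ adjZ G u w := by unfold adjZ; split_ifs <;> simp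
      have h5 := hasymm u w
      omega) le_rfl (by
      intro X
      have h2 : cutZ (fun u w => 2 * c₂ u w + 0 * c₂ u w) X
          = cutZ (fun u w => 5 * o u w + 3 * adjZ G u w) X := by simp only [hc₂]
      rw [cutZ_lin, cutZ_lin, ← cutZ_skew o ho] at h2
      simp only [hodiv] at h2
      have h3 := hX X
      have h4 := neg_abs_le (∑ v ∈ X, p v)
      simp only [Finset.sum_const_zero]
      omega)
    refine ⟨φ, hφ1, ?_, ?_, hφ3⟩
    · intro u w h
      have h1 := hφ1 u w
      have h2 := hφ2 u w
      have h3 := hφ2 w u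
      have h4 := hc₂ u w
      have h5 := hc₂ w u
      have h6 := ho u w
      have h7 := (hoadj u w).1 h
      have h8 := hasymm u w
      have h9 : adjZ G u w = 1 := by simp [adjZ, h]
      omega
    · intro u w h
      have h1 := hφ1 u w
      have h2 := hφ2 u w
      have h3 := hφ2 w u
      have h4 := hc₂ u w
      have h5 := hc₂ w u
      have h6 := ho u w
      have h7 := (hoadj u w).2 h
      have h8 := hasymm u w
      have h9 : adjZ G u w = 0 := by simp [adjZ, h]
      omega

open Classical in
theorem sum_eq_ncard [Fintype V] (p : V → ℤ) (X A B : Set V)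
    (h : ∀ v, p v = (if v ∈ A then 1 else 0) - (if v ∈ B then 1 else 0)) :
    ∑ v ∈ X.toFinset, p v = ((X ∩ A).ncard : ℤ) - ((X ∩ B).ncard : ℤ) := by
  simp only [h, Finset.sum_sub_distrib, Finset.sum_boole]
  rw [Set.ncard_eq_toFinset_card', Set.ncard_eq_toFinset_card']
  congr 3 <;> ext <;> simp

/-- A cubic graph has a nowhere-zero 5-flow iff it admits a balanced
valuation with values ±5/3; equivalently, iff there is a partition `V = A ∪ B` with
`(5/3)·||X∩A| − |X∩B|| ≤ |∂_G(X)|` for every `X ⊆ V`. -/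
theorem statement2 [Fintype V] (G : SimpleGraph V) (hcubic : IsCubic G) :
    (HasNowhereZeroFlow G 5 ↔
      ∃ f : V → ℝ, BalancedValuation G f ∧
        ∀ v, f v = -(5/3) ∨ f v = 5/3) ∧
    (HasNowhereZeroFlow G 5 ↔
      ∃ A B : Set V, A ∪ B = Set.univ ∧ A ∩ B = ∅ ∧
        ∀ X : Set V,
          (5/3 : ℝ) * |((X ∩ A).ncard : ℝ) - ((X ∩ B).ncard : ℝ)|
            ≤ ((edgeCut G X).ncard : ℝ)) := by
  classical
  rw [core5 G hcubic]
  refine ⟨⟨?_, ?_⟩, ⟨?_, ?_⟩⟩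
  · rintro ⟨p, hp, hX⟩
    refine ⟨fun v => 5/3 * (p v : ℝ), ?_, ?_⟩
    · intro X
      have h := hX X.toFinset
      rw [cutZ_adj, Set.coe_toFinset] at h
      rw [finsum_mem_eq_toFinset_sum, ← Finset.mul_sum, abs_mul]
      have h' : (5:ℝ) * |∑ v ∈ X.toFinset, (p v : ℝ)| ≤ 3 * ((edgeCut G X).ncard : ℝ) := by
        exact_mod_cast h
      rw [abs_of_pos (by norm_num : (0:ℝ) < 5/3)]
      linarith
    · intro v
      rcases hp v with h | h <;> simp [h]
  · rintro ⟨f, hf, hv⟩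
    have hp : ∀ v, ∃ p : ℤ, (p = 1 ∨ p = -1) ∧ f v = 5/3 * (p : ℝ) := by
      intro v
      rcases hv v with h | h
      · exact ⟨-1, by simp, by simp [h]⟩
      · exact ⟨1, by simp, by simp [h]⟩
    choose p hp1 hp2 using hp
    refine ⟨p, hp1, fun X => ?_⟩
    have h := hf (X : Set V)
    rw [finsum_mem_coe_finset] at h
    simp only [hp2] at h
    rw [← Finset.mul_sum, abs_mul, abs_of_pos (by norm_num : (0:ℝ) < 5/3)] at h
    rw [cutZ_adj]
    have h' : (5:ℝ) * |∑ v ∈ X, (p v : ℝ)| ≤ 3 * ((edgeCut G X).ncard : ℝ) := by linarith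
    exact_mod_cast h'
  · rintro ⟨p, hp, hX⟩
    refine ⟨{v | p v = 1}, {v | p v = -1}, ?_, ?_, ?_⟩
    · ext v; simpa using hp v
    · ext v
      simp only [Set.mem_inter_iff, Set.mem_ofPred_eq, Set.mem_empty_iff_false, iff_false]
      omega
    · intro X
      have h := hX X.toFinset
      rw [cutZ_adj, Set.coe_toFinset] at h
      have h' : (5:ℝ) * |((∑ v ∈ X.toFinset, p v : ℤ) : ℝ)| ≤ 3 * ((edgeCut G X).ncard : ℝ) := by
        exact_mod_cast h
      rw [sum_eq_ncard p X {v | p v = 1} {v | p v = -1} (fun v => by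
        rcases hp v with h | h <;> simp [h])] at h'
      push_cast at h'
      linarith
  · rintro ⟨A, B, hU, hI, hX⟩
    refine ⟨fun v => (if v ∈ A then 1 else 0) - (if v ∈ B then 1 else 0), ?_, ?_⟩
    · intro v
      have h1 : v ∈ A ∪ B := hU ▸ Set.mem_univ v
      have h2 : v ∉ A ∩ B := by rw [hI]; exact Set.notMem_empty v
      rw [Set.mem_union] at h1
      rw [Set.mem_inter_iff] at h2
      by_cases hA : v ∈ A <;> by_cases hB : v ∈ B <;> simp [hA, hB] at h1 h2 ⊢
    · intro X
      have h := hX (X : Set V)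
      rw [cutZ_adj]
      have e := sum_eq_ncard (fun v => (if v ∈ A then 1 else 0) - (if v ∈ B then 1 else 0))
        (X : Set V) A B (fun v => rfl)
      rw [Finset.toFinset_coe] at e
      rw [e]
      have h' : (5:ℝ) * |(((X : Set V) ∩ A).ncard : ℝ) - (((X : Set V) ∩ B).ncard : ℝ)|
        ≤ 3 * ((edgeCut G X).ncard : ℝ) := by linarith
      exact_mod_cast h'
end
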